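/- Let ρ : [0,∞) × ℝ → (0,∞) be a smooth solution of the renormalized curvature flow PDE ∂_t ρ = ρ² ∂²_θ ρ + ρ²(ρ − 2h_t), defined for all times, 2π-periodic in θ and satisfying the closure conditions for every t. Then lim_{t→∞} σ_t²/λ_t = 4π, and the rescaled sets (1/√(6t))(D_t − c_int(t)) converge in Hausdorff distance, as t → ∞, to the closed unit disk B(0,1), where D_t is the closed convex region enclosed by the curve C_t and c_int(t) is a center of an inscribed circle of C_t (a point c with B(c, r_int(t)) ⊆ D_t, r_int(t) being the inradius of D_t). Similarly (1/√(6t))(C_t − c_int(t)) converges in Hausdorff distance to the unit circle. -/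

import Mathlib

/-!
The proof tracks the isoperimetric deficit `Δ = σ² - 4πλ`. Along the flow the radius of curvature
satisfies `∂_t (1/ρ) = 2h - (∂²_θ ρ + ρ)`, and integration by parts gives `σ' = 4πh - ∫ ρ` and
`λ' = 2hσ - 2π`. Hence `Δ' = 8π² - 2σ ∫ ρ`, which is nonpositive by Cauchy–Schwarz, so `Δ` stays
bounded (`deficit_antitone`), while `λ' = 6π + 2Δ/λ` with `Δ ≥ 0` forces `λ/t → 6π`
(`tendsto_encArea_div`). Therefore `σ²/t → 24π²`, `σ²/λ → 4π`, and the mean radius `σ/2π` is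
asymptotic to `√(6t)`.

For the shape, a Bonnesen-type stability estimate is proved directly by Fourier series: about the
Steiner point, the support function differs from its mean `σ/2π` by at most `π + Δ/(3π)`
(`stability`, from `wirtinger_four`). Since `Δ` is bounded in time, the region stays between two
concentric disks of radii `σ/2π + O(1)`, and so does the region about any incentre (`pinching`).
The rescaling by `1/√(6t)` turns the bounded error into `o(1)`. For the curve itself, the rescaled
point `C(θ)` is compared with the normal `ν(θ)`.

All time derivatives are taken at `t > 0`, and the bounds start from `t = 1`, which avoids one-sided
derivatives at the initial time.
-/

open Real Set Filter MeasureTheory Topology NNReal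

/-- The perimeter of the strictly convex curve with curvature function `ρ`
in tangent-angle coordinates: `σ = ∫₀^{2π} dθ/ρ(θ)`. -/
noncomputable def perim (ρ : ℝ → ℝ) : ℝ := ∫ θ in (0:ℝ)..(2 * π), 1 / ρ θ

/-- The curve associated to a curvature function `ρ` in tangent-angle coordinates,
as a curve in the Euclidean plane. -/
noncomputable def curveE (ρ : ℝ → ℝ) (θ : ℝ) : EuclideanSpace ℝ (Fin 2) :=
  (WithLp.equiv 2 (Fin 2 → ℝ)).symm
    ![∫ β in (0:ℝ)..θ, Real.cos β / ρ β, ∫ β in (0:ℝ)..θ, Real.sin β / ρ β]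

/-- The enclosed area `λ = ½ ∫₀^{2π} ⟨C(θ), ν(θ)⟩/ρ(θ) dθ`, with outward normal
`ν(θ) = (sin θ, −cos θ)`. -/
noncomputable def encArea (ρ : ℝ → ℝ) : ℝ :=
  (1 / 2) * ∫ θ in (0:ℝ)..(2 * π),
    ((curveE ρ θ 0) * Real.sin θ - (curveE ρ θ 1) * Real.cos θ) / ρ θ

/-- The ratio `h = σ/λ`. -/
noncomputable def hRatio (ρ : ℝ → ℝ) : ℝ := perim ρ / encArea ρ

/-- The closed convex region `D` enclosed by the (strictly convex, closed) curve, i.e. the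
convex hull of the curve. -/
noncomputable def encSet (ρ : ℝ → ℝ) : Set (EuclideanSpace ℝ (Fin 2)) :=
  convexHull ℝ (Set.range (curveE ρ))

/-- The inradius of the region enclosed by the curve. -/
noncomputable def inradius (ρ : ℝ → ℝ) : ℝ :=
  sSup {r : ℝ | ∃ c, Metric.closedBall c r ⊆ encSet ρ}

/-- `ρ : [0,∞) × ℝ → (0,∞)` is a smooth solution of the renormalized curvature flow PDE
`∂_t ρ = ρ² ∂²_θ ρ + ρ²(ρ − 2 h_t)`, defined for all times, `2π`-periodic in `θ` and
satisfying the closure conditions for every `t`. -/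
def IsRCFSolutionInf (ρ : ℝ → ℝ → ℝ) : Prop :=
  ContDiffOn ℝ (⊤ : ℕ∞) (Function.uncurry ρ) (Ici 0 ×ˢ (univ : Set ℝ)) ∧
  (∀ t ∈ Ici (0:ℝ), ∀ θ : ℝ, 0 < ρ t θ) ∧
  (∀ t ∈ Ici (0:ℝ), ∀ θ : ℝ, ρ t (θ + 2 * π) = ρ t θ) ∧
  (∀ t ∈ Ici (0:ℝ), (∫ θ in (0:ℝ)..(2 * π), Real.cos θ / ρ t θ) = 0) ∧
  (∀ t ∈ Ici (0:ℝ), (∫ θ in (0:ℝ)..(2 * π), Real.sin θ / ρ t θ) = 0) ∧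
  (∀ t ∈ Ici (0:ℝ), ∀ θ : ℝ,
    HasDerivWithinAt (fun s => ρ s θ)
      ((ρ t θ) ^ 2 * iteratedDeriv 2 (ρ t) θ + (ρ t θ) ^ 2 * (ρ t θ - 2 * hRatio (ρ t)))
      (Ici 0) t)

/-! ### Wirtinger's inequality for functions without first harmonics -/

/-- Wirtinger's inequality with the improved constant `4`: the Fourier coefficients of index
`0, ±1` vanish, so Parseval's identity compares `‖cₙ(q')‖ = |n| ‖cₙ(q)‖` with `|n| ≥ 2`. -/
theorem wirtinger_four {q q' : ℝ → ℝ} (hq : ∀ x, HasDerivAt q (q' x) x) (hq' : Continuous q')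
    (hper : q (2 * π) = q 0) (h0 : ∫ x in (0:ℝ)..(2 * π), q x = 0)
    (hcos : ∫ x in (0:ℝ)..(2 * π), q x * Real.cos x = 0)
    (hsin : ∫ x in (0:ℝ)..(2 * π), q x * Real.sin x = 0) :
    4 * ∫ x in (0:ℝ)..(2 * π), q x ^ 2 ≤ ∫ x in (0:ℝ)..(2 * π), q' x ^ 2 := by
  have hqc : Continuous q := continuous_iff_continuousAt.2 fun x => (hq x).continuousAt
  have hab : (0:ℝ) < 2 * π := Real.two_pi_pos
  have memLp : ∀ g : ℝ → ℝ, Continuous g →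
      MemLp (fun x => (g x : ℂ)) 2 (volume.restrict (Ioc 0 (2 * π))) := by
    intro g hg
    have h1 : Continuous (fun x => (g x : ℂ)) := Complex.continuous_ofReal.comp hg
    obtain ⟨C, hC⟩ := (isCompact_Icc (a := (0:ℝ)) (b := 2 * π)).exists_bound_of_continuousOn
      h1.continuousOn
    refine MemLp.of_bound h1.aestronglyMeasurable C ?_
    filter_upwards [ae_restrict_mem measurableSet_Ioc] with x hx
    exact hC x ⟨hx.1.le, hx.2⟩
  have P1 := hasSum_sq_fourierCoeffOn hab (memLp q hqc)
  have P2 := hasSum_sq_fourierCoeffOn hab (memLp q' hq')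
  have key : ∀ n : ℤ, 4 * ‖fourierCoeffOn hab (fun x => (q x : ℂ)) n‖ ^ 2 ≤
      ‖fourierCoeffOn hab (fun x => (q' x : ℂ)) n‖ ^ 2 := by
    have zero : ∀ n : ℤ, (∫ x in (0:ℝ)..(2 * π), q x * Real.cos (n * x) = 0) →
        (∫ x in (0:ℝ)..(2 * π), q x * Real.sin (n * x) = 0) →
        fourierCoeffOn hab (fun x => (q x : ℂ)) n = 0 := by
      intro n hc hs
      rw [fourierCoeffOn_eq_integral]
      have : ∀ x : ℝ, (fourier (-n) (x : AddCircle (2 * π - 0))) • (q x : ℂ) =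
          ((q x * Real.cos (n * x) : ℝ) : ℂ) - ((q x * Real.sin (n * x) : ℝ) : ℂ) * Complex.I := by
        intro x
        rw [fourier_coe_apply]
        have : (2 * π * Complex.I * ((-n : ℤ) : ℂ) * x / ((2 * π - 0 : ℝ) : ℂ)) =
            (-(n * x : ℂ)) * Complex.I := by
          have : (π : ℂ) ≠ 0 := by exact_mod_cast Real.pi_ne_zero
          push_cast
          field_simp
          simp
          ring
        rw [this, Complex.exp_mul_I]
        simp only [Complex.cos_neg, Complex.sin_neg]
        push_cast
        simp only [smul_eq_mul]
        ring
      simp_rw [this]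
      rw [intervalIntegral.integral_sub, intervalIntegral.integral_mul_const,
        intervalIntegral.integral_ofReal, intervalIntegral.integral_ofReal, hc, hs]
      · simp
      · apply Continuous.intervalIntegrable; fun_prop
      · apply Continuous.intervalIntegrable; fun_prop
    intro n
    by_cases hn0 : n = 0
    · rw [zero n (by simpa [hn0] using h0) (by simp [hn0])]
      simp
    by_cases hn1 : n = 1
    · rw [zero n (by simpa [hn1] using hcos) (by simpa [hn1] using hsin)]
      simp
    by_cases hn2 : n = -1
    · rw [zero n (by simpa [hn2] using hcos) (by simpa [hn2] using hsin)]
      simp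
    have hd := fourierCoeffOn_of_hasDerivAt hab hn0 (f := fun x => (q x : ℂ))
      (f' := fun x => (q' x : ℂ)) (fun x _ => (hq x).ofReal_comp)
      ((Complex.continuous_ofReal.comp hq').intervalIntegrable _ _)
    have hn : ‖fourierCoeffOn hab (fun x => (q x : ℂ)) n‖ * |(n : ℝ)| =
        ‖fourierCoeffOn hab (fun x => (q' x : ℂ)) n‖ := by
      rw [hd, hper]
      simp only [sub_self, mul_zero, zero_sub, sub_zero, norm_mul, norm_neg, norm_div, norm_one,
        Complex.norm_I, Complex.norm_intCast, Complex.norm_real, Complex.norm_ofNat,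
        Complex.ofReal_zero, mul_one, Real.norm_eq_abs, abs_of_pos Real.pi_pos]
      have : |(n : ℝ)| ≠ 0 := by simpa using hn0
      have := Real.pi_ne_zero
      field_simp
      simp
    have h2 : (2 : ℝ) ≤ |(n : ℝ)| := by
      have : (2 : ℤ) ≤ |n| := by rcases abs_cases n with h | h <;> omega
      exact_mod_cast this
    rw [← hn, mul_pow]
    nlinarith [sq_nonneg ‖fourierCoeffOn hab (fun x => (q x : ℂ)) n‖,
      mul_le_mul h2 h2 (by norm_num) (by positivity)]
  have := hasSum_le key (P1.mul_left 4) P2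
  simp only [Complex.norm_real, Real.norm_eq_abs, sq_abs, smul_eq_mul, sub_zero] at this
  have hp : 0 < (2 * π)⁻¹ := by positivity
  refine le_of_mul_le_mul_left ?_ hp
  linarith

/-! ### Compactness of convex hulls -/

/-- In finite dimension the convex hull of a compact set is compact: by Carathéodory's theorem it
is a finite union of continuous images of simplices times powers of `s`. -/
theorem isCompact_convexHull_of_isCompact {E : Type*} [NormedAddCommGroup E] [NormedSpace ℝ E]
    [FiniteDimensional ℝ E] {s : Set E} (hs : IsCompact s) : IsCompact (convexHull ℝ s) := by
  set Φ : ∀ k : ℕ, (Fin k → ℝ) × (Fin k → E) → E := fun k p => ∑ i, p.1 i • p.2 i with hΦ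
  set A : ∀ k : ℕ, Set ((Fin k → ℝ) × (Fin k → E)) := fun k =>
    stdSimplex ℝ (Fin k) ×ˢ Set.pi univ (fun _ => s) with hA
  have heq : convexHull ℝ s = ⋃ k ∈ Finset.range (Module.finrank ℝ E + 2), Φ k '' A k := by
    apply Subset.antisymm
    · intro x hx
      obtain ⟨ι, _, z, w, hz, hind, hw, hw1, rfl⟩ := eq_pos_convex_span_of_mem_convexHull hx
      have hcard : Fintype.card ι < Module.finrank ℝ E + 2 := by
        have h1 := hind.card_le_finrank_succ
        have h2 := Submodule.finrank_le (vectorSpan ℝ (Set.range z))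
        omega
      refine mem_biUnion (Finset.mem_coe.2 (Finset.mem_range.2 hcard)) ?_
      let e := (Fintype.equivFin ι).symm
      refine ⟨(w ∘ e, z ∘ e), ⟨⟨fun i => (hw _).le, ?_⟩, fun i _ => hz ⟨_, rfl⟩⟩, ?_⟩
      · exact (Equiv.sum_comp e w).trans hw1
      · exact Equiv.sum_comp e (fun i => w i • z i)
    · refine iUnion₂_subset fun k _ => ?_
      rintro _ ⟨⟨w, z⟩, ⟨hw, hz⟩, rfl⟩
      exact (convex_convexHull ℝ s).sum_mem (fun i _ => hw.1 i) hw.2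
        fun i _ => subset_convexHull ℝ s (hz i trivial)
  rw [heq]
  refine Finset.isCompact_biUnion _ fun k _ => ?_
  refine ((isCompact_stdSimplex ℝ _).prod (isCompact_univ_pi fun _ => hs)).image ?_
  fun_prop

/-! ### Closed strictly convex curves and their support functions -/

/-- The conditions on a curvature function of a single closed strictly convex curve; for a flow they
hold on each time slice. -/
structure IsClosedCurv (ρ : ℝ → ℝ) : Prop where
  cont : Continuous ρ
  pos : ∀ θ, 0 < ρ θ
  per : ∀ θ, ρ (θ + 2 * π) = ρ θ
  cos_int : ∫ θ in (0:ℝ)..(2 * π), Real.cos θ / ρ θ = 0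
  sin_int : ∫ θ in (0:ℝ)..(2 * π), Real.sin θ / ρ θ = 0

/-- The support function `⟨C(θ), ν(θ)⟩` with respect to the origin, in coordinates. -/
noncomputable def supp (ρ : ℝ → ℝ) (θ : ℝ) : ℝ :=
  curveE ρ θ 0 * Real.sin θ - curveE ρ θ 1 * Real.cos θ

/-- The tangential component `⟨C(θ), (cos θ, sin θ)⟩`, which is the derivative of `supp`. -/
noncomputable def tang (ρ : ℝ → ℝ) (θ : ℝ) : ℝ :=
  curveE ρ θ 0 * Real.cos θ + curveE ρ θ 1 * Real.sin θ

theorem curveE_zero (ρ : ℝ → ℝ) (θ : ℝ) :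
    curveE ρ θ 0 = ∫ β in (0:ℝ)..θ, Real.cos β / ρ β := rfl

theorem curveE_one (ρ : ℝ → ℝ) (θ : ℝ) :
    curveE ρ θ 1 = ∫ β in (0:ℝ)..θ, Real.sin β / ρ β := rfl

theorem encArea_eq (ρ : ℝ → ℝ) :
    encArea ρ = (1 / 2) * ∫ θ in (0:ℝ)..(2 * π), supp ρ θ / ρ θ := rfl

section fixed
variable {ρ : ℝ → ℝ}

theorem cont_cos (h : IsClosedCurv ρ) : Continuous fun β => Real.cos β / ρ β :=
  Real.continuous_cos.div h.cont fun x => (h.pos x).ne'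

theorem cont_sin (h : IsClosedCurv ρ) : Continuous fun β => Real.sin β / ρ β :=
  Real.continuous_sin.div h.cont fun x => (h.pos x).ne'

theorem cont_inv (h : IsClosedCurv ρ) : Continuous fun β => 1 / ρ β :=
  continuous_const.div h.cont fun x => (h.pos x).ne'

theorem hasDerivAt_X (h : IsClosedCurv ρ) (θ : ℝ) :
    HasDerivAt (fun θ => curveE ρ θ 0) (Real.cos θ / ρ θ) θ :=
  (cont_cos h).integral_hasStrictDerivAt 0 θ |>.hasDerivAt

theorem hasDerivAt_Y (h : IsClosedCurv ρ) (θ : ℝ) :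
    HasDerivAt (fun θ => curveE ρ θ 1) (Real.sin θ / ρ θ) θ :=
  (cont_sin h).integral_hasStrictDerivAt 0 θ |>.hasDerivAt

theorem hasDerivAt_supp (h : IsClosedCurv ρ) (θ : ℝ) : HasDerivAt (supp ρ) (tang ρ θ) θ := by
  refine (((hasDerivAt_X h θ).mul (Real.hasDerivAt_sin θ)).sub
    ((hasDerivAt_Y h θ).mul (Real.hasDerivAt_cos θ))).congr_deriv ?_
  simp only [tang]
  ring

theorem hasDerivAt_tang (h : IsClosedCurv ρ) (θ : ℝ) :
    HasDerivAt (tang ρ) (1 / ρ θ - supp ρ θ) θ := by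
  refine (((hasDerivAt_X h θ).mul (Real.hasDerivAt_cos θ)).add
    ((hasDerivAt_Y h θ).mul (Real.hasDerivAt_sin θ))).congr_deriv ?_
  simp only [supp]
  have := Real.sin_sq_add_cos_sq θ
  have h2 := (h.pos θ).ne'
  field_simp
  linear_combination this

theorem curveE_two_pi (h : IsClosedCurv ρ) : curveE ρ (2 * π) 0 = 0 ∧ curveE ρ (2 * π) 1 = 0 :=
  ⟨h.cos_int, h.sin_int⟩

theorem curveE_at_zero (ρ : ℝ → ℝ) : curveE ρ 0 0 = 0 ∧ curveE ρ 0 1 = 0 := by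
  simp [curveE_zero, curveE_one]

theorem curveE_periodic (h : IsClosedCurv ρ) (θ : ℝ) : curveE ρ (θ + 2 * π) = curveE ρ θ := by
  have key : ∀ f : ℝ → ℝ, Continuous f → (∀ x, f (x + 2 * π) = f x) →
      (∫ x in (0:ℝ)..(2 * π), f x = 0) →
      ∫ x in (0:ℝ)..(θ + 2 * π), f x = ∫ x in (0:ℝ)..θ, f x := by
    intro f hf hp h0
    have hp' : Function.Periodic f (2 * π) := hp
    have h1 := hp'.intervalIntegral_add_eq θ 0
    rw [zero_add, h0] at h1
    rw [← intervalIntegral.integral_add_adjacent_intervals (hf.intervalIntegrable 0 θ)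
      (hf.intervalIntegrable θ _), h1, add_zero]
  ext i
  fin_cases i
  · exact key _ (cont_cos h) (fun x => by simp [h.per]) h.cos_int
  · exact key _ (cont_sin h) (fun x => by simp [h.per]) h.sin_int

/-- The outward unit normal `ν(θ) = (sin θ, -cos θ)`. -/
noncomputable def nu (θ : ℝ) : EuclideanSpace ℝ (Fin 2) := !₂[Real.sin θ, -Real.cos θ]

theorem inner_nu (x : EuclideanSpace ℝ (Fin 2)) (θ : ℝ) :
    inner ℝ x (nu θ) = x 0 * Real.sin θ - x 1 * Real.cos θ := by
  simp [nu, PiLp.inner_apply, Fin.sum_univ_two]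
  ring

theorem norm_nu (θ : ℝ) : ‖nu θ‖ = 1 := by
  simp [nu, EuclideanSpace.norm_eq, Fin.sum_univ_two]

theorem nu_periodic : Function.Periodic nu (2 * π) := fun θ => by simp [nu]

theorem exists_nu (x : EuclideanSpace ℝ (Fin 2)) : ∃ θ, x = ‖x‖ • nu θ := by
  set z : ℂ := ⟨-x 1, x 0⟩ with hz
  have hn : ‖z‖ = ‖x‖ := by
    rw [Complex.norm_def, Complex.normSq_apply, EuclideanSpace.norm_eq, Fin.sum_univ_two]
    simp [hz, sq]
    ring_nf
  have hre := Complex.norm_mul_cos_arg z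
  have him := Complex.norm_mul_sin_arg z
  refine ⟨Complex.arg z, ?_⟩
  ext i
  fin_cases i
  · change x 0 = ‖x‖ * Real.sin (Complex.arg z)
    rw [← hn, him]
  · change x 1 = ‖x‖ * -Real.cos (Complex.arg z)
    rw [← hn, mul_neg, hre]
    simp [hz]

theorem inner_curve (ρ : ℝ → ℝ) (θ : ℝ) : inner ℝ (curveE ρ θ) (nu θ) = supp ρ θ :=
  inner_nu _ _

/-- The curve lies on the inner side of its tangent line at `C(θ)`: the height
`φ ↦ ⟨C(φ), ν(θ)⟩` has derivative `sin (θ - φ) / ρ(φ)`, so it increases up to `θ` and decreases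
after it within a period. -/
theorem inner_curve_le (h : IsClosedCurv ρ) (φ θ : ℝ) :
    inner ℝ (curveE ρ φ) (nu θ) ≤ inner ℝ (curveE ρ θ) (nu θ) := by
  set G : ℝ → ℝ := fun φ => inner ℝ (curveE ρ φ) (nu θ) with hG
  have hGd : ∀ φ, HasDerivAt G (Real.sin (θ - φ) / ρ φ) φ := by
    intro φ
    simp only [hG, inner_nu]
    refine (((hasDerivAt_X h φ).mul_const (Real.sin θ)).sub
      ((hasDerivAt_Y h φ).mul_const (Real.cos θ))).congr_deriv ?_
    rw [Real.sin_sub]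
    ring
  have hGc : Continuous G := continuous_iff_continuousAt.2 fun x => (hGd x).continuousAt
  have hper : Function.Periodic G (2 * π) := fun x => by simp only [hG, curveE_periodic h]
  obtain ⟨ψ, hψ, hψe⟩ := hper.exists_mem_Ico Real.two_pi_pos φ (θ - π)
  change G φ ≤ G θ
  rw [hψe]
  rcases le_total ψ θ with hle | hle
  · have : MonotoneOn G (Icc (θ - π) θ) := by
      apply monotoneOn_of_deriv_nonneg (convex_Icc _ _) hGc.continuousOn
        (fun x _ => (hGd x).differentiableAt.differentiableWithinAt)
      intro x hx
      rw [interior_Icc] at hx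
      rw [(hGd x).deriv]
      exact div_nonneg (Real.sin_nonneg_of_nonneg_of_le_pi (by linarith [hx.2])
        (by linarith [hx.1])) (h.pos x).le
    exact this ⟨hψ.1, hle⟩ ⟨by linarith [Real.pi_pos], le_rfl⟩ hle
  · have : AntitoneOn G (Icc θ (θ + π)) := by
      apply antitoneOn_of_deriv_nonpos (convex_Icc _ _) hGc.continuousOn
        (fun x _ => (hGd x).differentiableAt.differentiableWithinAt)
      intro x hx
      rw [interior_Icc] at hx
      rw [(hGd x).deriv]
      refine div_nonpos_of_nonpos_of_nonneg (Real.sin_nonpos_of_nonpos_of_neg_pi_le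
        (by linarith [hx.1]) (by linarith [hx.2])) (h.pos x).le
    exact this ⟨le_rfl, by linarith [Real.pi_pos]⟩ ⟨hle, by linarith [hψ.2]⟩ hle

theorem mem_encSet_le (h : IsClosedCurv ρ) {x : EuclideanSpace ℝ (Fin 2)} (hx : x ∈ encSet ρ)
    (θ : ℝ) : inner ℝ x (nu θ) ≤ inner ℝ (curveE ρ θ) (nu θ) := by
  have : encSet ρ ⊆ {x | inner ℝ x (nu θ) ≤ inner ℝ (curveE ρ θ) (nu θ)} := by
    apply convexHull_min
    · rintro _ ⟨φ, rfl⟩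
      exact inner_curve_le h φ θ
    · have := convex_halfSpace_le (𝕜 := ℝ)
        (f := fun x : EuclideanSpace ℝ (Fin 2) => inner ℝ x (nu θ))
        ⟨fun x y => inner_add_left _ _ _, fun c x => real_inner_smul_left _ _ _⟩
        (inner ℝ (curveE ρ θ) (nu θ))
      exact this
  exact this hx

theorem cont_curveE (h : IsClosedCurv ρ) : Continuous (curveE ρ) := by
  have hX : Continuous fun θ => curveE ρ θ 0 :=
    continuous_iff_continuousAt.2 fun x => (hasDerivAt_X h x).continuousAt
  have hY : Continuous fun θ => curveE ρ θ 1 :=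
    continuous_iff_continuousAt.2 fun x => (hasDerivAt_Y h x).continuousAt
  have : Continuous fun θ => WithLp.ofLp (curveE ρ θ) := by
    apply continuous_pi
    intro i
    fin_cases i
    · exact hX
    · exact hY
  exact (PiLp.continuous_toLp 2 _).comp this

theorem isCompact_encSet (h : IsClosedCurv ρ) : IsCompact (encSet ρ) := by
  have hper : Function.Periodic (curveE ρ) (2 * π) := curveE_periodic h
  have : Set.range (curveE ρ) = curveE ρ '' Icc 0 (0 + 2 * π) :=
    (hper.image_Icc Real.two_pi_pos 0).symm
  rw [encSet, this]
  exact isCompact_convexHull_of_isCompact (isCompact_Icc.image (cont_curveE h))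

/-- If the support function about `a` is at least `r`, then the disk of radius `r` about `a` lies in
the enclosed region: a point outside is separated from the region by a line with normal `ν(θ)`. -/
theorem closedBall_subset_encSet (h : IsClosedCurv ρ) {a : EuclideanSpace ℝ (Fin 2)} {r : ℝ}
    (hr : ∀ θ, r ≤ inner ℝ (curveE ρ θ - a) (nu θ)) : Metric.closedBall a r ⊆ encSet ρ := by
  intro x hx
  by_contra hxD
  obtain ⟨f, u, hfu, hux⟩ := geometric_hahn_banach_closed_point (convex_convexHull ℝ _)
    (isCompact_encSet h).isClosed hxD
  set w := (InnerProductSpace.toDual ℝ (EuclideanSpace ℝ (Fin 2))).symm f with hw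
  have hf : ∀ y, f y = inner ℝ w y := fun y => by
    simp [hw]
  obtain ⟨θ, hθ⟩ := exists_nu w
  have h1 := hfu (curveE ρ θ) (subset_convexHull _ _ ⟨θ, rfl⟩)
  rw [hf, hθ, real_inner_smul_left, real_inner_comm] at h1
  rw [hf, hθ, real_inner_smul_left, real_inner_comm] at hux
  have h2 : ‖w‖ * inner ℝ (curveE ρ θ) (nu θ) < ‖w‖ * inner ℝ x (nu θ) := h1.trans hux
  have h3 : inner ℝ (curveE ρ θ) (nu θ) < inner ℝ x (nu θ) :=
    lt_of_mul_lt_mul_left h2 (norm_nonneg _)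
  have h4 := hr θ
  have h5 : inner ℝ (x - a) (nu θ) ≤ ‖x - a‖ := by
    simpa [norm_nu] using real_inner_le_norm (x - a) (nu θ)
  rw [mem_closedBall_iff_norm] at hx
  rw [inner_sub_left] at h4 h5
  linarith

theorem encSet_subset_closedBall (h : IsClosedCurv ρ) {a : EuclideanSpace ℝ (Fin 2)} {r : ℝ}
    (hr : ∀ θ, inner ℝ (curveE ρ θ - a) (nu θ) ≤ r) : encSet ρ ⊆ Metric.closedBall a r := by
  intro x hx
  obtain ⟨θ, hθ⟩ := exists_nu (x - a)
  have h1 := mem_encSet_le h hx θ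
  have h2 := hr θ
  have h3 : inner ℝ (x - a) (nu θ) = ‖x - a‖ := by
    nth_rewrite 1 [hθ]
    rw [real_inner_smul_left, real_inner_self_eq_norm_sq, norm_nu]
    ring
  rw [mem_closedBall_iff_norm]
  rw [inner_sub_left] at h2 h3
  linarith

theorem le_inner_of_closedBall_subset (h : IsClosedCurv ρ) {a : EuclideanSpace ℝ (Fin 2)} {r : ℝ}
    (hr0 : 0 ≤ r) (hr : Metric.closedBall a r ⊆ encSet ρ) (θ : ℝ) :
    r ≤ inner ℝ (curveE ρ θ - a) (nu θ) := by
  have h1 := mem_encSet_le h (x := a + r • nu θ) (hr (by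
    simp [norm_smul, norm_nu, abs_of_nonneg hr0])) θ
  rw [inner_add_left, real_inner_smul_left, real_inner_self_eq_norm_sq, norm_nu] at h1
  rw [inner_sub_left]
  linarith

/-- The support function is nonnegative since `C(0) = 0`, and it cannot vanish identically because
the second derivative of `supp` is `1 / ρ - supp`. -/
theorem encArea_pos (h : IsClosedCurv ρ) : 0 < encArea ρ := by
  have hs : Continuous (supp ρ) :=
    continuous_iff_continuousAt.2 fun x => (hasDerivAt_supp h x).continuousAt
  have h0 : ∀ θ, 0 ≤ supp ρ θ := fun θ => by
    have := inner_curve_le h 0 θ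
    rw [inner_curve, inner_nu, (curveE_at_zero ρ).1, (curveE_at_zero ρ).2] at this
    linarith
  have hpos : ∃ θ ∈ Ico 0 (2 * π), 0 < supp ρ θ := by
    by_contra hcon
    push Not at hcon
    have hz : ∀ θ ∈ Ioo 0 (2 * π), supp ρ θ = 0 := fun θ hθ =>
      le_antisymm (hcon θ ⟨hθ.1.le, hθ.2⟩) (h0 θ)
    have hloc : ∀ θ ∈ Ioo 0 (2 * π), tang ρ θ = 0 := fun θ hθ => by
      have e : supp ρ =ᶠ[𝓝 θ] fun _ => 0 :=
        Filter.eventually_of_mem (isOpen_Ioo.mem_nhds hθ) hz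
      exact (hasDerivAt_supp h θ).unique ((hasDerivAt_const θ (0:ℝ)).congr_of_eventuallyEq e)
    have hπ : π ∈ Ioo 0 (2 * π) := ⟨Real.pi_pos, by linarith [Real.pi_pos]⟩
    have e : tang ρ =ᶠ[𝓝 π] fun _ => 0 :=
      Filter.eventually_of_mem (isOpen_Ioo.mem_nhds hπ) hloc
    have := (hasDerivAt_tang h π).unique ((hasDerivAt_const π (0:ℝ)).congr_of_eventuallyEq e)
    rw [hz π hπ] at this
    have h3 := one_div_pos.2 (h.pos π)
    linarith
  obtain ⟨θ, hθ, hp⟩ := hpos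
  rw [encArea_eq]
  refine mul_pos (by norm_num) (intervalIntegral.integral_pos Real.two_pi_pos
    (hs.div h.cont fun x => (h.pos x).ne').continuousOn
    (fun x _ => div_nonneg (h0 x) (h.pos x).le) ⟨θ, ⟨hθ.1, hθ.2.le⟩, div_pos hp (h.pos θ)⟩)

/-! ### Stability of the isoperimetric inequality -/

/-- A sup bound by the Dirichlet energy, from `|q'| ≤ (1 + q' ^ 2) / 2`, which controls the oscillation
of `q`. -/
theorem abs_le_of_mean_zero {q q' : ℝ → ℝ} (hq : ∀ x, HasDerivAt q (q' x) x)
    (hq' : Continuous q') (h0 : ∫ x in (0:ℝ)..(2 * π), q x = 0) {θ : ℝ}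
    (hθ : θ ∈ Icc 0 (2 * π)) :
    |q θ| ≤ π + (1 / 2) * ∫ x in (0:ℝ)..(2 * π), q' x ^ 2 := by
  have hqc : Continuous q := continuous_iff_continuousAt.2 fun x => (hq x).continuousAt
  set E : ℝ → ℝ := fun x => ∫ y in (0:ℝ)..x, (1 + q' y ^ 2) / 2 with hE
  have hEd : ∀ x, HasDerivAt E ((1 + q' x ^ 2) / 2) x := fun x =>
    ((by fun_prop : Continuous fun y => (1 + q' y ^ 2) / 2).integral_hasStrictDerivAt 0 x).hasDerivAt
  have m1 : Monotone (fun x => E x - q x) := by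
    refine monotone_of_hasDerivAt_nonneg (fun x => (hEd x).sub (hq x)) fun x => ?_
    change 0 ≤ (1 + q' x ^ 2) / 2 - q' x
    nlinarith [sq_nonneg (q' x - 1)]
  have m2 : Monotone (fun x => E x + q x) := by
    refine monotone_of_hasDerivAt_nonneg (fun x => (hEd x).add (hq x)) fun x => ?_
    change 0 ≤ (1 + q' x ^ 2) / 2 + q' x
    nlinarith [sq_nonneg (q' x + 1)]
  have m3 : Monotone E := monotone_of_hasDerivAt_nonneg hEd fun x => by positivity
  have hE0 : E 0 = 0 := by simp [hE]
  have hE2 : E (2 * π) = π + (1 / 2) * ∫ x in (0:ℝ)..(2 * π), q' x ^ 2 := by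
    have hint : IntervalIntegrable (fun y => q' y ^ 2) volume 0 (2 * π) :=
      (hq'.pow 2).intervalIntegrable _ _
    simp only [hE]
    rw [intervalIntegral.integral_div, intervalIntegral.integral_add
      (continuous_const.intervalIntegrable _ _) hint]
    simp
    ring
  rw [← hE2]
  have osc : ∀ x ∈ Icc 0 (2 * π), |q θ - q x| ≤ E (2 * π) := by
    intro x hx
    have a1 := m3 hθ.1
    have a2 := m3 hθ.2
    have a3 := m3 hx.1
    have a4 := m3 hx.2
    rw [hE0] at a1 a3
    rw [abs_le]
    rcases le_total x θ with hle | hle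
    · have b1 := m1 hle
      have b2 := m2 hle
      simp only at b1 b2
      constructor <;> linarith
    · have b1 := m1 hle
      have b2 := m2 hle
      simp only at b1 b2
      constructor <;> linarith
  have hpi := Real.two_pi_pos
  have h1 : ∫ x in (0:ℝ)..(2 * π), (q θ - q x) = 2 * π * q θ := by
    rw [intervalIntegral.integral_sub (by simp) (hqc.intervalIntegrable _ _), h0]
    simp
  have h2 := intervalIntegral.norm_integral_le_of_norm_le_const (a := 0) (b := 2 * π)
    (f := fun x => q θ - q x) (C := E (2 * π)) (fun x hx => by
      rw [uIoc_of_le hpi.le] at hx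
      exact osc x ⟨hx.1.le, hx.2⟩)
  rw [h1, Real.norm_eq_abs, abs_mul, abs_of_pos hpi, sub_zero, abs_of_pos hpi, mul_comm] at h2
  exact le_of_mul_le_mul_right h2 hpi

theorem supp_ends (h : IsClosedCurv ρ) :
    supp ρ 0 = 0 ∧ tang ρ 0 = 0 ∧ supp ρ (2 * π) = 0 ∧ tang ρ (2 * π) = 0 := by
  have h1 := curveE_at_zero ρ
  have h2 := curveE_two_pi h
  simp [supp, tang, h1, h2]

/-- The isoperimetric deficit `σ² - 4πλ`. -/
noncomputable def deficit (ρ : ℝ → ℝ) : ℝ := perim ρ ^ 2 - 4 * π * encArea ρ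

/-- Stability in terms of the deficit. With `a` the Steiner point, the support function about `a` minus
its mean `σ / 2π` is a function `q` without harmonics `0, ±1`, and integration by parts gives
`deficit = 2π ∫ (q'² - q²)`. The improved Wirtinger inequality makes this at least
`(3π/2) ∫ q'²`, so it controls `sup |q|`. -/
theorem stability (h : IsClosedCurv ρ) :
    0 ≤ deficit ρ ∧ ∃ a : EuclideanSpace ℝ (Fin 2), ∀ θ,
      |inner ℝ (curveE ρ θ - a) (nu θ) - perim ρ / (2 * π)| ≤ π + deficit ρ / (3 * π) := by
  have hpi := Real.pi_pos
  obtain ⟨s0, t0, s1, t1⟩ := supp_ends h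
  have hsc : Continuous (supp ρ) :=
    continuous_iff_continuousAt.2 fun x => (hasDerivAt_supp h x).continuousAt
  have htc : Continuous (tang ρ) :=
    continuous_iff_continuousAt.2 fun x => (hasDerivAt_tang h x).continuousAt
  have hR := cont_inv h
  set m := perim ρ / (2 * π) with hm
  have hσ : perim ρ = 2 * π * m := by rw [hm]; field_simp
  set a := (1 / π) * ∫ x in (0:ℝ)..(2 * π), supp ρ x * Real.sin x with ha
  set b := -((1 / π) * ∫ x in (0:ℝ)..(2 * π), supp ρ x * Real.cos x) with hb
  -- `(a, b)` is the Steiner point; `q` is the support function without its harmonics `0, ±1`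
  set q : ℝ → ℝ := fun x => supp ρ x - m - a * Real.sin x + b * Real.cos x with hq
  set q' : ℝ → ℝ := fun x => tang ρ x - a * Real.cos x - b * Real.sin x with hq'
  have hqd : ∀ x, HasDerivAt q (q' x) x := fun x => by
    refine ((((hasDerivAt_supp h x).sub_const m).sub ((Real.hasDerivAt_sin x).const_mul a)).add
      ((Real.hasDerivAt_cos x).const_mul b)).congr_deriv ?_
    simp only [hq']
    ring
  have hq'd : ∀ x, HasDerivAt q' (1 / ρ x - m - q x) x := fun x => by
    refine (((hasDerivAt_tang h x).sub ((Real.hasDerivAt_cos x).const_mul a)).sub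
      ((Real.hasDerivAt_sin x).const_mul b)).congr_deriv ?_
    simp only [hq]
    ring
  have hqc : Continuous q := by fun_prop
  have hq'c : Continuous q' := by fun_prop
  have ii : ∀ f : ℝ → ℝ, Continuous f → IntervalIntegrable f volume 0 (2 * π) :=
    fun f hf => hf.intervalIntegrable _ _
  have hperim : ∫ x in (0:ℝ)..(2 * π), 1 / ρ x = 2 * π * m := hσ
  have isupp : ∫ x in (0:ℝ)..(2 * π), supp ρ x = 2 * π * m := by
    have := intervalIntegral.integral_eq_sub_of_hasDerivAt (a := 0) (b := 2 * π)
      (fun x _ => hasDerivAt_tang h x) (ii _ (by fun_prop))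
    rw [intervalIntegral.integral_sub (ii _ hR) (ii _ hsc), t0, t1, hperim] at this
    linarith
  have iss : ∫ x in (0:ℝ)..(2 * π), Real.sin x * Real.sin x = π := by
    simp_rw [← sq, integral_sin_sq]
    simp
  have icc : ∫ x in (0:ℝ)..(2 * π), Real.cos x * Real.cos x = π := by
    simp_rw [← sq, integral_cos_sq]
    simp
  have isc : ∫ x in (0:ℝ)..(2 * π), Real.sin x * Real.cos x = 0 := by
    rw [integral_sin_mul_cos₁]
    simp
  have is0 : ∫ x in (0:ℝ)..(2 * π), Real.sin x = 0 := by simp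
  have ic0 : ∫ x in (0:ℝ)..(2 * π), Real.cos x = 0 := by simp
  -- integral of `q` against a continuous weight `f`, term by term
  have lin : ∀ f : ℝ → ℝ, Continuous f → ∫ x in (0:ℝ)..(2 * π), q x * f x =
      (∫ x in (0:ℝ)..(2 * π), supp ρ x * f x) - m * (∫ x in (0:ℝ)..(2 * π), f x) -
      a * (∫ x in (0:ℝ)..(2 * π), Real.sin x * f x) +
      b * (∫ x in (0:ℝ)..(2 * π), Real.cos x * f x) := by
    intro f hf
    rw [← intervalIntegral.integral_const_mul, ← intervalIntegral.integral_const_mul,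
      ← intervalIntegral.integral_const_mul, ← intervalIntegral.integral_sub,
      ← intervalIntegral.integral_sub, ← intervalIntegral.integral_add]
    · refine intervalIntegral.integral_congr fun x _ => ?_
      simp only [hq]
      ring
    all_goals refine ii _ ?_
    all_goals fun_prop
  have q0 : ∫ x in (0:ℝ)..(2 * π), q x = 0 := by
    have := lin (fun _ => 1) continuous_const
    simp only [mul_one, is0, ic0, isupp] at this
    rw [this]
    simp
    ring
  have qs : ∫ x in (0:ℝ)..(2 * π), q x * Real.sin x = 0 := by
    have hcs : ∫ x in (0:ℝ)..(2 * π), Real.cos x * Real.sin x = 0 := by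
      simpa only [mul_comm] using isc
    rw [lin _ Real.continuous_sin, is0, iss, hcs, ha]
    field_simp
    ring
  have qc : ∫ x in (0:ℝ)..(2 * π), q x * Real.cos x = 0 := by
    rw [lin _ Real.continuous_cos, ic0, icc, isc, hb]
    field_simp
    ring
  have qper : q (2 * π) = q 0 := by simp [hq, s0, s1]
  have W := wirtinger_four hqd hq'c qper q0 qc qs
  set I0 := ∫ x in (0:ℝ)..(2 * π), q x ^ 2 with hI0
  set I1 := ∫ x in (0:ℝ)..(2 * π), q' x ^ 2 with hI1
  have hI0n : 0 ≤ I0 := intervalIntegral.integral_nonneg (by positivity) fun x _ => sq_nonneg _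
  -- `∫ q R = ∫ (q² - q'²)`, by parts
  have parts : ∫ x in (0:ℝ)..(2 * π), q x * (1 / ρ x) = I0 - I1 := by
    have := intervalIntegral.integral_eq_sub_of_hasDerivAt (a := 0) (b := 2 * π)
      (fun x _ => (hqd x).mul (hq'd x)) (ii _ (by fun_prop))
    have e : ∀ x, q' x * q' x + q x * (1 / ρ x - m - q x) =
      q' x ^ 2 + q x * (1 / ρ x) - m * q x - q x ^ 2 := fun x => by ring
    simp_rw [e] at this
    rw [intervalIntegral.integral_sub (ii _ (by fun_prop)) (ii _ (by fun_prop)),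
      intervalIntegral.integral_sub (ii _ (by fun_prop)) (ii _ (by fun_prop)),
      intervalIntegral.integral_add (ii _ (by fun_prop)) (ii _ (by fun_prop)),
      intervalIntegral.integral_const_mul, q0] at this
    have e2 : q' (2 * π) = q' 0 := by simp [hq', t0, t1]
    simp only [Pi.mul_apply, e2, qper] at this
    linarith
  have area : encArea ρ = (1 / 2) * (2 * π * m ^ 2 + I0 - I1) := by
    have := lin (fun x => 1 / ρ x) hR
    have z1 : ∫ x in (0:ℝ)..(2 * π), Real.sin x * (1 / ρ x) = 0 := by
      simpa only [mul_one_div] using h.sin_int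
    have z2 : ∫ x in (0:ℝ)..(2 * π), Real.cos x * (1 / ρ x) = 0 := by
      simpa only [mul_one_div] using h.cos_int
    rw [z1, z2, hperim, parts] at this
    rw [encArea_eq]
    simp only [mul_one_div] at this
    linear_combination (-1 / 2) * this
  have hdef : deficit ρ = 2 * π * (I1 - I0) := by
    rw [deficit, area, hσ]
    ring
  refine ⟨by rw [hdef]; nlinarith, !₂[a, b], ?_⟩
  intro θ
  have hbd : ∀ θ ∈ Icc 0 (2 * π), |q θ| ≤ π + deficit ρ / (3 * π) := by
    intro θ hθ
    refine (abs_le_of_mean_zero hqd hq'c q0 hθ).trans ?_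
    rw [hdef]
    have : 2 * π * (I1 - I0) / (3 * π) = 2 / 3 * (I1 - I0) := by field_simp
    rw [this]
    change π + 1 / 2 * I1 ≤ _
    linarith
  have hfq : ∀ θ, inner ℝ (curveE ρ θ - !₂[a, b]) (nu θ) - m = q θ := by
    intro θ
    rw [inner_sub_left, inner_curve, inner_nu]
    simp [hq]
    ring
  obtain ⟨ψ, hψ, e⟩ := Function.Periodic.exists_mem_Ico₀
    (f := fun θ => inner ℝ (curveE ρ θ - !₂[a, b]) (nu θ) - m)
    (fun x => by simp only [curveE_periodic h, nu_periodic x]) Real.two_pi_pos θ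
  rw [e, hfq]
  exact hbd ψ ⟨hψ.1, hψ.2.le⟩

end fixed

/-! ### Integrals depending on time -/

theorem hasDerivAt_integral_param {G G' : ℝ → ℝ → ℝ} {a b t₀ : ℝ} (ht₀ : 0 < t₀)
    (hd : ∀ t, 0 < t → ∀ θ, HasDerivAt (fun s => G s θ) (G' t θ) t)
    (hG : ∀ t, 0 < t → Continuous (G t))
    (hc : ContinuousOn (Function.uncurry G') (Ioi 0 ×ˢ univ)) :
    HasDerivAt (fun t => ∫ θ in a..b, G t θ) (∫ θ in a..b, G' t₀ θ) t₀ := by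
  have hK : IsCompact (Icc (t₀ / 2) (2 * t₀) ×ˢ uIcc a b) := isCompact_Icc.prod isCompact_uIcc
  obtain ⟨C, hC⟩ := hK.exists_bound_of_continuousOn
    (hc.mono fun p hp => ⟨lt_of_lt_of_le (by positivity) hp.1.1, trivial⟩)
  have hG' : Continuous (G' t₀) :=
    hc.comp_continuous (f := fun θ => (t₀, θ)) (by fun_prop) fun θ => ⟨ht₀, trivial⟩
  refine (intervalIntegral.hasDerivAt_integral_of_dominated_loc_of_deriv_le
    (s := Icc (t₀ / 2) (2 * t₀)) (bound := fun _ => C)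
    (Icc_mem_nhds (by linarith) (by linarith)) ?_ ((hG _ ht₀).intervalIntegrable _ _)
    hG'.aestronglyMeasurable ?_ (by simp) ?_).2
  · filter_upwards [Ioi_mem_nhds ht₀] with t ht
    exact (hG t ht).aestronglyMeasurable
  · exact ae_of_all _ fun θ hθ t ht => hC (t, θ) ⟨ht, uIoc_subset_uIcc hθ⟩
  · exact ae_of_all _ fun θ hθ t ht => hd t (lt_of_lt_of_le (by positivity) ht.1) θ

theorem continuousOn_primitive_param {g : ℝ → ℝ → ℝ}
    (hg : ContinuousOn (Function.uncurry g) (Ioi 0 ×ˢ univ)) :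
    ContinuousOn (fun p : ℝ × ℝ => ∫ β in (0:ℝ)..p.2, g p.1 β) (Ioi 0 ×ˢ univ) := by
  rintro ⟨t₀, θ₀⟩ ⟨ht₀, -⟩
  simp only [mem_Ioi] at ht₀
  apply ContinuousAt.continuousWithinAt
  have hF : Continuous (Function.uncurry fun (p : ℝ × ℝ) β => g (max p.1 (t₀ / 2)) β) :=
    hg.comp_continuous (f := fun q : (ℝ × ℝ) × ℝ => (max q.1.1 (t₀ / 2), q.2)) (by fun_prop)
      fun q => ⟨(half_pos ht₀).trans_le (le_max_right _ _), trivial⟩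
  have := intervalIntegral.continuous_parametric_intervalIntegral_of_continuous
    (μ := volume) (a₀ := 0) hF (s := fun p : ℝ × ℝ => p.2) continuous_snd
  refine this.continuousAt.congr ?_
  have hm : ∀ᶠ p : ℝ × ℝ in 𝓝 (t₀, θ₀), t₀ / 2 < p.1 :=
    (continuous_fst.tendsto (t₀, θ₀)).eventually (lt_mem_nhds (half_lt_self ht₀))
  filter_upwards [hm] with p hp
  rw [max_eq_left hp.le]

/-! ### Integral identities on a time slice -/

section slice
variable {r : ℝ → ℝ}

theorem hasDerivAt_r (hr : ContDiff ℝ 2 r) (θ : ℝ) : HasDerivAt r (deriv r θ) θ :=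
  (hr.differentiable (by norm_num) θ).hasDerivAt

theorem hasDerivAt_r' (hr : ContDiff ℝ 2 r) (θ : ℝ) :
    HasDerivAt (deriv r) (iteratedDeriv 2 r θ) θ := by
  have h1 : ContDiff ℝ 1 (deriv r) := (contDiff_succ_iff_deriv (n := 1)).1 hr |>.2.2
  rw [iteratedDeriv_succ, iteratedDeriv_one]
  exact (h1.differentiable (by norm_num) θ).hasDerivAt

theorem integral_speed (hr : ContDiff ℝ 2 r) (h : IsClosedCurv r) (k : ℝ) :
    ∫ θ in (0:ℝ)..(2 * π), (k - (iteratedDeriv 2 r θ + r θ)) =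
      2 * π * k - ∫ θ in (0:ℝ)..(2 * π), r θ := by
  have hr2 : Continuous (iteratedDeriv 2 r) := hr.continuous_iteratedDeriv 2 le_rfl
  have hrc := hr.continuous
  have ii : ∀ f : ℝ → ℝ, Continuous f → IntervalIntegrable f volume 0 (2 * π) :=
    fun f hf => hf.intervalIntegrable _ _
  have hper : deriv r (2 * π) = deriv r 0 := by
    have h1 : deriv (fun x => r (x + 2 * π)) 0 = deriv r (0 + 2 * π) :=
      deriv_comp_add_const _ _ _
    rw [show (fun x => r (x + 2 * π)) = r from funext h.per, zero_add] at h1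
    exact h1.symm
  have e := intervalIntegral.integral_eq_sub_of_hasDerivAt (a := 0) (b := 2 * π)
    (fun x _ => hasDerivAt_r' hr x) (ii _ hr2)
  rw [hper, sub_self] at e
  rw [intervalIntegral.integral_sub (ii _ (by fun_prop)) (ii _ (by fun_prop)),
    intervalIntegral.integral_add (ii _ (by fun_prop)) (ii _ (by fun_prop)), e]
  simp

theorem integral_supp (h : IsClosedCurv r) : ∫ x in (0:ℝ)..(2 * π), supp r x = perim r := by
  obtain ⟨-, t0, -, t1⟩ := supp_ends h
  have hR := cont_inv h
  have hsc : Continuous (supp r) :=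
    continuous_iff_continuousAt.2 fun x => (hasDerivAt_supp h x).continuousAt
  have := intervalIntegral.integral_eq_sub_of_hasDerivAt (a := 0) (b := 2 * π)
    (fun x _ => hasDerivAt_tang h x) ((hR.sub hsc).intervalIntegrable _ _)
  rw [intervalIntegral.integral_sub (hR.intervalIntegrable _ _) (hsc.intervalIntegrable _ _),
    t0, t1] at this
  rw [perim]
  linarith

/-- Integrates the identity `1 - supp · (d²r + r) = d(tang · r - supp · dr)`, `d` the derivative; here
`k - (d²r + r)` is the time derivative of `1 / r` under the flow with `k = 2h`. -/
theorem integral_supp_mul_speed (hr : ContDiff ℝ 2 r) (h : IsClosedCurv r) (k : ℝ) :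
    ∫ θ in (0:ℝ)..(2 * π), supp r θ * (k - (iteratedDeriv 2 r θ + r θ)) =
      k * perim r - 2 * π := by
  have hr2 : Continuous (iteratedDeriv 2 r) := hr.continuous_iteratedDeriv 2 le_rfl
  have hrc := hr.continuous
  have ii : ∀ f : ℝ → ℝ, Continuous f → IntervalIntegrable f volume 0 (2 * π) :=
    fun f hf => hf.intervalIntegrable _ _
  obtain ⟨s0, t0, s1, t1⟩ := supp_ends h
  have hsc : Continuous (supp r) :=
    continuous_iff_continuousAt.2 fun x => (hasDerivAt_supp h x).continuousAt
  have e := intervalIntegral.integral_eq_sub_of_hasDerivAt (a := 0) (b := 2 * π)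
    (f := fun x => tang r x * r x - supp r x * deriv r x)
    (f' := fun x => 1 - supp r x * (iteratedDeriv 2 r x + r x))
    (fun x _ => by
      refine (((hasDerivAt_tang h x).mul (hasDerivAt_r hr x)).sub
        ((hasDerivAt_supp h x).mul (hasDerivAt_r' hr x))).congr_deriv ?_
      have := (h.pos x).ne'
      field_simp
      ring) (ii _ (by fun_prop))
  simp only [s0, s1, t0, t1, zero_mul, sub_zero] at e
  have e2 : ∀ x, supp r x * (k - (iteratedDeriv 2 r x + r x)) =
      k * supp r x + (1 - supp r x * (iteratedDeriv 2 r x + r x)) - 1 := fun x => by ring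
  simp_rw [e2]
  rw [intervalIntegral.integral_sub (ii _ (by fun_prop)) (ii _ (by fun_prop)),
    intervalIntegral.integral_add (ii _ (by fun_prop)) (ii _ (by fun_prop)), e,
    intervalIntegral.integral_const_mul, integral_supp h]
  simp

/-- The time derivative of the support function is `k - r` up to a translation of the curve; the
trigonometric terms come from keeping `C(0)` at the origin. -/
theorem primitive_speed (hr : ContDiff ℝ 2 r) (k θ : ℝ) :
    (∫ β in (0:ℝ)..θ, Real.cos β * (k - (iteratedDeriv 2 r β + r β))) * Real.sin θ -
      (∫ β in (0:ℝ)..θ, Real.sin β * (k - (iteratedDeriv 2 r β + r β))) * Real.cos θ =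
      k - r θ + deriv r 0 * Real.sin θ + (r 0 - k) * Real.cos θ := by
  have hr2 : Continuous (iteratedDeriv 2 r) := hr.continuous_iteratedDeriv 2 le_rfl
  have hrc := hr.continuous
  have e1 := intervalIntegral.integral_eq_sub_of_hasDerivAt (a := 0) (b := θ)
    (f := fun x => k * Real.sin x - (deriv r x * Real.cos x + r x * Real.sin x))
    (f' := fun x => Real.cos x * (k - (iteratedDeriv 2 r x + r x)))
    (fun x _ => by
      refine (((Real.hasDerivAt_sin x).const_mul k).sub (((hasDerivAt_r' hr x).mul
        (Real.hasDerivAt_cos x)).add ((hasDerivAt_r hr x).mul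
        (Real.hasDerivAt_sin x)))).congr_deriv ?_
      ring) (Continuous.intervalIntegrable (by fun_prop) _ _)
  have e2 := intervalIntegral.integral_eq_sub_of_hasDerivAt (a := 0) (b := θ)
    (f := fun x => -(k * Real.cos x) - (deriv r x * Real.sin x - r x * Real.cos x))
    (f' := fun x => Real.sin x * (k - (iteratedDeriv 2 r x + r x)))
    (fun x _ => by
      refine (((Real.hasDerivAt_cos x).const_mul k).neg.sub (((hasDerivAt_r' hr x).mul
        (Real.hasDerivAt_sin x)).sub ((hasDerivAt_r hr x).mul
        (Real.hasDerivAt_cos x)))).congr_deriv ?_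
      ring) (Continuous.intervalIntegrable (by fun_prop) _ _)
  rw [e1, e2]
  simp only [Real.sin_zero, Real.cos_zero]
  linear_combination (k - r θ) * Real.sin_sq_add_cos_sq θ

/-- The translation terms of `primitive_speed` do not contribute, by the closure conditions. -/
theorem integral_primitive_speed (h : IsClosedCurv r) (k : ℝ) :
    ∫ θ in (0:ℝ)..(2 * π),
      (k - r θ + deriv r 0 * Real.sin θ + (r 0 - k) * Real.cos θ) * (1 / r θ) =
      k * perim r - 2 * π := by
  have hR := cont_inv h
  have ii : ∀ f : ℝ → ℝ, Continuous f → IntervalIntegrable f volume 0 (2 * π) :=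
    fun f hf => hf.intervalIntegrable _ _
  have e : ∀ θ, (k - r θ + deriv r 0 * Real.sin θ + (r 0 - k) * Real.cos θ) * (1 / r θ) =
      k * (1 / r θ) - 1 + deriv r 0 * (Real.sin θ / r θ) + (r 0 - k) * (Real.cos θ / r θ) := by
    intro θ
    have := (h.pos θ).ne'
    field_simp
  have c1 := cont_sin h
  have c2 := cont_cos h
  simp_rw [e]
  rw [intervalIntegral.integral_add (ii _ (by fun_prop)) (ii _ (by fun_prop)),
    intervalIntegral.integral_add (ii _ (by fun_prop)) (ii _ (by fun_prop)),
    intervalIntegral.integral_sub (ii _ (by fun_prop)) (ii _ (by fun_prop)),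
    intervalIntegral.integral_const_mul, intervalIntegral.integral_const_mul,
    intervalIntegral.integral_const_mul, h.sin_int, h.cos_int]
  simp [perim]

theorem perim_pos (h : IsClosedCurv r) : 0 < perim r :=
  intervalIntegral.intervalIntegral_pos_of_pos_on ((cont_inv h).intervalIntegrable _ _)
    (fun x _ => one_div_pos.2 (h.pos x)) Real.two_pi_pos

/-- The Cauchy–Schwarz inequality for `∫ 1/r` and `∫ r`. -/
theorem four_pi_sq_le (h : IsClosedCurv r) :
    4 * π ^ 2 ≤ perim r * ∫ θ in (0:ℝ)..(2 * π), r θ := by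
  have hR := cont_inv h
  have hrc := h.cont
  have hσ := perim_pos h
  have hpi := Real.pi_pos
  have ii : ∀ f : ℝ → ℝ, Continuous f → IntervalIntegrable f volume 0 (2 * π) :=
    fun f hf => hf.intervalIntegrable _ _
  set s := perim r / (2 * π) with hs
  have hσs : perim r = 2 * π * s := by rw [hs]; field_simp
  have hs0 : 0 < s := by positivity
  have : 0 ≤ ∫ θ in (0:ℝ)..(2 * π), (s ^ 2 * r θ + 1 / r θ - 2 * s) := by
    refine intervalIntegral.integral_nonneg (by positivity) fun x _ => ?_
    have h0 := h.pos x
    have : s ^ 2 * r x + 1 / r x - 2 * s = (s * r x - 1) ^ 2 / r x := by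
      field_simp
      ring
    rw [this]
    positivity
  rw [intervalIntegral.integral_sub (ii _ (by fun_prop)) (ii _ (by fun_prop)),
    intervalIntegral.integral_add (ii _ (by fun_prop)) (ii _ (by fun_prop)),
    intervalIntegral.integral_const_mul] at this
  change 0 ≤ _ + perim r - _ at this
  rw [hσs] at this ⊢
  simp at this
  have h3 : 0 ≤ s * (s * (∫ θ in (0:ℝ)..(2 * π), r θ) - 2 * π) := by linarith
  have h4 := (mul_nonneg_iff_of_pos_left hs0).1 h3
  nlinarith

end slice

/-! ### Evolution of perimeter, area and deficit -/

section flow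
variable {ρ : ℝ → ℝ → ℝ}

theorem flow_contDiffAt (hρ : IsRCFSolutionInf ρ) {t : ℝ} (ht : 0 < t) (θ : ℝ) :
    ContDiffAt ℝ (⊤ : ℕ∞) (Function.uncurry ρ) (t, θ) :=
  hρ.1.contDiffAt (prod_mem_nhds (Ici_mem_nhds ht) univ_mem)

theorem flow_slice (hρ : IsRCFSolutionInf ρ) {t : ℝ} (ht : 0 < t) : ContDiff ℝ 2 (ρ t) := by
  refine contDiff_iff_contDiffAt.2 fun θ => ?_
  have h1 : ContDiffAt ℝ 2 (Function.uncurry ρ) (t, θ) :=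
    (flow_contDiffAt hρ ht θ).of_le (by norm_cast)
  have h2 : ContDiffAt ℝ 2 (fun x : ℝ => (t, x)) θ := contDiffAt_const.prodMk contDiffAt_id
  exact h1.comp θ h2

theorem flow_closed (hρ : IsRCFSolutionInf ρ) {t : ℝ} (ht : 0 < t) : IsClosedCurv (ρ t) :=
  ⟨(flow_slice hρ ht).continuous, hρ.2.1 t ht.le, hρ.2.2.1 t ht.le, hρ.2.2.2.1 t ht.le,
    hρ.2.2.2.2.1 t ht.le⟩

/-- The time derivative of the radius of curvature `1 / ρ` under the flow. -/
noncomputable def speed (ρ : ℝ → ℝ → ℝ) (t θ : ℝ) : ℝ :=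
  2 * hRatio (ρ t) - (iteratedDeriv 2 (ρ t) θ + ρ t θ)

theorem flow_deriv (hρ : IsRCFSolutionInf ρ) {t : ℝ} (ht : 0 < t) (θ : ℝ) :
    HasDerivAt (fun s => ρ s θ) (-(ρ t θ) ^ 2 * speed ρ t θ) t := by
  refine ((hρ.2.2.2.2.2 t ht.le θ).hasDerivAt (Ici_mem_nhds ht)).congr_deriv ?_
  rw [speed]
  ring

theorem flow_deriv_inv (hρ : IsRCFSolutionInf ρ) {t : ℝ} (ht : 0 < t) (θ : ℝ) :
    HasDerivAt (fun s => 1 / ρ s θ) (speed ρ t θ) t := by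
  have h0 := (hρ.2.1 t ht.le θ).ne'
  simp only [one_div]
  refine ((flow_deriv hρ ht θ).inv h0).congr_deriv ?_
  field_simp

theorem flow_continuousOn (hρ : IsRCFSolutionInf ρ) :
    ContinuousOn (fun p : ℝ × ℝ => 1 / ρ p.1 p.2) (Ioi 0 ×ˢ univ) := by
  refine continuousOn_const.div (fun p hp => ?_) fun p hp => (hρ.2.1 p.1 (mem_Ici.2 (le_of_lt (mem_Ioi.1 hp.1))) p.2).ne'
  exact (flow_contDiffAt hρ hp.1 p.2).continuousAt.continuousWithinAt

theorem speed_continuousOn (hρ : IsRCFSolutionInf ρ) :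
    ContinuousOn (Function.uncurry (speed ρ)) (Ioi 0 ×ˢ univ) := by
  have hopen : IsOpen (Ioi (0:ℝ) ×ˢ (univ : Set ℝ)) := isOpen_Ioi.prod isOpen_univ
  have hcd : ContDiffOn ℝ (⊤ : ℕ∞) (Function.uncurry ρ) (Ioi 0 ×ˢ (univ : Set ℝ)) :=
    hρ.1.mono (prod_mono Ioi_subset_Ici_self subset_rfl)
  have hf : ContinuousOn (fderiv ℝ (Function.uncurry ρ)) (Ioi 0 ×ˢ univ) :=
    hcd.continuousOn_fderiv_of_isOpen hopen (by exact_mod_cast le_top)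
  have h1 : ContinuousOn (fun p : ℝ × ℝ => fderiv ℝ (Function.uncurry ρ) p (1, 0))
      (Ioi 0 ×ˢ univ) := hf.clm_apply continuousOn_const
  have hi := flow_continuousOn hρ
  refine ((h1.mul (hi.pow 2)).neg).congr fun p hp => ?_
  obtain ⟨t, θ⟩ := p
  have ht : 0 < t := hp.1
  have hd : HasFDerivAt (Function.uncurry ρ) (fderiv ℝ (Function.uncurry ρ) (t, θ)) (t, θ) :=
    ((flow_contDiffAt hρ ht θ).differentiableAt (by simp)).hasFDerivAt
  have hl : HasDerivAt (fun s : ℝ => (s, θ)) ((1 : ℝ), (0 : ℝ)) t :=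
    (hasDerivAt_id t).prodMk (hasDerivAt_const t θ)
  have h3 : HasDerivAt (fun s => ρ s θ) (fderiv ℝ (Function.uncurry ρ) (t, θ) (1, 0)) t :=
    HasFDerivAt.comp_hasDerivAt (f := fun s : ℝ => (s, θ)) t hd hl
  have h2 := h3.unique (flow_deriv hρ ht θ)
  have h0 := (hρ.2.1 t ht.le θ).ne'
  change speed ρ t θ = -(fderiv ℝ (Function.uncurry ρ) (t, θ) (1, 0) * (1 / ρ t θ) ^ 2)
  rw [h2]
  field_simp

theorem hasDerivAt_perim (hρ : IsRCFSolutionInf ρ) {t : ℝ} (ht : 0 < t) :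
    HasDerivAt (fun s => perim (ρ s))
      (2 * π * (2 * hRatio (ρ t)) - ∫ θ in (0:ℝ)..(2 * π), ρ t θ) t := by
  rw [← integral_speed (flow_slice hρ ht) (flow_closed hρ ht)]
  exact hasDerivAt_integral_param ht (fun s hs θ => flow_deriv_inv hρ hs θ)
    (fun s hs => cont_inv (flow_closed hρ hs)) (speed_continuousOn hρ)

theorem hasDerivAt_encArea (hρ : IsRCFSolutionInf ρ) {t : ℝ} (ht : 0 < t) :
    HasDerivAt (fun s => encArea (ρ s)) (2 * hRatio (ρ t) * perim (ρ t) - 2 * π) t := by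
  have hi := flow_continuousOn hρ
  have hs := speed_continuousOn hρ
  have hcos : ContinuousOn (fun p : ℝ × ℝ => Real.cos p.2) (Ioi 0 ×ˢ univ) :=
    (Real.continuous_cos.comp continuous_snd).continuousOn
  have hsin : ContinuousOn (fun p : ℝ × ℝ => Real.sin p.2) (Ioi 0 ×ˢ univ) :=
    (Real.continuous_sin.comp continuous_snd).continuousOn
  -- time derivatives of the coordinates of the curve
  have hX : ∀ t, 0 < t → ∀ θ, HasDerivAt (fun s => curveE (ρ s) θ 0)
      (∫ β in (0:ℝ)..θ, Real.cos β * speed ρ t β) t := by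
    intro t ht θ
    refine hasDerivAt_integral_param (G' := fun t β => Real.cos β * speed ρ t β) ht
      (fun s hs β => ?_) (fun s hs => cont_cos (flow_closed hρ hs)) (hcos.mul hs)
    simpa only [mul_one_div] using (flow_deriv_inv hρ hs β).const_mul (Real.cos β)
  have hY : ∀ t, 0 < t → ∀ θ, HasDerivAt (fun s => curveE (ρ s) θ 1)
      (∫ β in (0:ℝ)..θ, Real.sin β * speed ρ t β) t := by
    intro t ht θ
    refine hasDerivAt_integral_param (G' := fun t β => Real.sin β * speed ρ t β) ht
      (fun s hs β => ?_) (fun s hs => cont_sin (flow_closed hρ hs)) (hsin.mul hs)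
    simpa only [mul_one_div] using (flow_deriv_inv hρ hs β).const_mul (Real.sin β)
  set S' : ℝ → ℝ → ℝ := fun t θ => (∫ β in (0:ℝ)..θ, Real.cos β * speed ρ t β) * Real.sin θ -
    (∫ β in (0:ℝ)..θ, Real.sin β * speed ρ t β) * Real.cos θ with hS'
  have hsupp : ∀ t, 0 < t → ∀ θ, HasDerivAt (fun s => supp (ρ s) θ) (S' t θ) t :=
    fun t ht θ => ((hX t ht θ).mul_const _).sub ((hY t ht θ).mul_const _)
  have hS'c : ContinuousOn (Function.uncurry S') (Ioi 0 ×ˢ univ) :=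
    ((continuousOn_primitive_param (g := fun t β => Real.cos β * speed ρ t β)
      (hcos.mul hs)).mul hsin).sub
      ((continuousOn_primitive_param (g := fun t β => Real.sin β * speed ρ t β)
      (hsin.mul hs)).mul hcos)
  have hSc : ContinuousOn (fun p : ℝ × ℝ => supp (ρ p.1) p.2) (Ioi 0 ×ˢ univ) := by
    have a1 := continuousOn_primitive_param (g := fun t β => Real.cos β / ρ t β)
      ((hcos.mul hi).congr fun p _ => (mul_one_div _ _).symm)
    have a2 := continuousOn_primitive_param (g := fun t β => Real.sin β / ρ t β)
      ((hsin.mul hi).congr fun p _ => (mul_one_div _ _).symm)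
    exact (a1.mul hsin).sub (a2.mul hcos)
  have hc := flow_closed hρ ht
  have key := hasDerivAt_integral_param (a := 0) (b := 2 * π)
    (G := fun t θ => supp (ρ t) θ * (1 / ρ t θ))
    (G' := fun t θ => S' t θ * (1 / ρ t θ) + supp (ρ t) θ * speed ρ t θ) ht
    (fun s hs θ => (hsupp s hs θ).mul (flow_deriv_inv hρ hs θ))
    (fun s hs => by
      have h := flow_closed hρ hs
      exact (continuous_iff_continuousAt.2 fun x => (hasDerivAt_supp h x).continuousAt).mul
        (cont_inv h))
    ((hS'c.mul hi).add (hSc.mul hs))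
  have hsl : Continuous (speed ρ t) :=
    hs.comp_continuous (f := fun θ => (t, θ)) (by fun_prop) fun θ => ⟨ht, trivial⟩
  have hS't : Continuous (S' t) :=
    hS'c.comp_continuous (f := fun θ => (t, θ)) (by fun_prop) fun θ => ⟨ht, trivial⟩
  have hsu : Continuous (supp (ρ t)) :=
    continuous_iff_continuousAt.2 fun x => (hasDerivAt_supp hc x).continuousAt
  have hR := cont_inv hc
  have e1 : ∫ θ in (0:ℝ)..(2 * π), S' t θ * (1 / ρ t θ) =
      2 * hRatio (ρ t) * perim (ρ t) - 2 * π := by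
    rw [← integral_primitive_speed hc]
    refine intervalIntegral.integral_congr fun θ _ => ?_
    simp only [← primitive_speed (flow_slice hρ ht)]
    rfl
  have e2 : ∫ θ in (0:ℝ)..(2 * π), supp (ρ t) θ * speed ρ t θ =
      2 * hRatio (ρ t) * perim (ρ t) - 2 * π :=
    integral_supp_mul_speed (flow_slice hρ ht) hc _
  have i1 : IntervalIntegrable (fun θ => S' t θ * (1 / ρ t θ)) volume 0 (2 * π) :=
    (hS't.mul hR).intervalIntegrable _ _
  have i2 : IntervalIntegrable (fun θ => supp (ρ t) θ * speed ρ t θ) volume 0 (2 * π) :=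
    (hsu.mul hsl).intervalIntegrable _ _
  rw [intervalIntegral.integral_add i1 i2, e1, e2] at key
  simp only [encArea_eq]
  simp only [mul_one_div] at key
  refine (key.const_mul (1 / 2)).congr_deriv ?_
  ring

/-- `Δ' = 8π² - 2σ ∫ ρ`, which is nonpositive by `four_pi_sq_le`: the nonlocal terms cancel because
`σ' = 4πh - ∫ ρ` and `λ' = 2hσ - 2π`. -/
theorem hasDerivAt_deficit (hρ : IsRCFSolutionInf ρ) {t : ℝ} (ht : 0 < t) :
    HasDerivAt (fun s => deficit (ρ s))
      (8 * π ^ 2 - 2 * (perim (ρ t) * ∫ θ in (0:ℝ)..(2 * π), ρ t θ)) t := by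
  refine (((hasDerivAt_perim hρ ht).pow 2).sub
    ((hasDerivAt_encArea hρ ht).const_mul (4 * π))).congr_deriv ?_
  push_cast
  ring

theorem deficit_antitone (hρ : IsRCFSolutionInf ρ) {t : ℝ} (ht : 1 ≤ t) :
    deficit (ρ t) ≤ deficit (ρ 1) := by
  have : AntitoneOn (fun s => deficit (ρ s)) (Ici 1) := by
    have hd : ∀ x ∈ Ici (1:ℝ), HasDerivAt (fun s => deficit (ρ s)) _ x :=
      fun x hx => hasDerivAt_deficit hρ (lt_of_lt_of_le one_pos hx)
    refine antitoneOn_of_deriv_nonpos (convex_Ici 1)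
      (fun x hx => (hd x hx).continuousAt.continuousWithinAt)
      (fun x hx => (hd x (interior_subset hx)).differentiableAt.differentiableWithinAt) ?_
    intro x hx
    rw [(hd x (interior_subset hx)).deriv]
    have := four_pi_sq_le (flow_closed hρ (lt_of_lt_of_le one_pos (interior_subset hx : x ∈ Ici 1)))
    linarith
  exact this (mem_Ici.2 le_rfl) ht ht

/-- The area grows at rate `6π` plus an error governed by the deficit, since `σ² = 4πλ + Δ`. -/
theorem hasDerivAt_encArea' (hρ : IsRCFSolutionInf ρ) {t : ℝ} (ht : 0 < t) :
    HasDerivAt (fun s => encArea (ρ s)) (6 * π + 2 * deficit (ρ t) / encArea (ρ t)) t := by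
  refine (hasDerivAt_encArea hρ ht).congr_deriv ?_
  have := encArea_pos (flow_closed hρ ht)
  rw [hRatio, deficit]
  field_simp
  ring

/-- The area grows at least linearly. -/
theorem encArea_lower (hρ : IsRCFSolutionInf ρ) :
    ∃ μ > 0, ∀ t, 1 ≤ t → μ * t ≤ encArea (ρ t) := by
  have h1 := encArea_pos (flow_closed hρ one_pos)
  set μ := min (encArea (ρ 1)) (6 * π) with hμ
  refine ⟨μ, lt_min h1 (by positivity), fun t ht => ?_⟩
  have : MonotoneOn (fun s => encArea (ρ s) - μ * s) (Ici 1) := by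
    have hd : ∀ x ∈ Ici (1:ℝ), HasDerivAt (fun s => encArea (ρ s) - μ * s) _ x :=
      fun x hx => (hasDerivAt_encArea' hρ (lt_of_lt_of_le one_pos hx)).sub
        ((hasDerivAt_id x).const_mul μ)
    refine monotoneOn_of_deriv_nonneg (convex_Ici 1)
      (fun x hx => (hd x hx).continuousAt.continuousWithinAt)
      (fun x hx => (hd x (interior_subset hx)).differentiableAt.differentiableWithinAt) ?_
    intro x hx
    rw [(hd x (interior_subset hx)).deriv]
    have hcl := flow_closed hρ (lt_of_lt_of_le one_pos (interior_subset hx : x ∈ Ici 1))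
    have a1 := (stability hcl).1
    have a2 := encArea_pos hcl
    have a3 : 0 ≤ 2 * deficit (ρ x) / encArea (ρ x) := by positivity
    have a4 : μ ≤ 6 * π := min_le_right _ _
    linarith
  have h2 := this (mem_Ici.2 le_rfl) (mem_Ici.2 ht) ht
  have h3 : μ ≤ encArea (ρ 1) := min_le_left _ _
  simp only at h2
  linarith

/-- Since `0 ≤ Δ ≤ Δ(1)` and `λ ≥ μ t`, the excess rate `2Δ/λ` is at most a constant over `t`, so
`λ = 6π t + O(log t)`. -/
theorem tendsto_encArea_div (hρ : IsRCFSolutionInf ρ) :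
    Tendsto (fun t => encArea (ρ t) / t) atTop (𝓝 (6 * π)) := by
  obtain ⟨μ, hμ, hlow⟩ := encArea_lower hρ
  set K := 2 * deficit (ρ 1) / μ with hK
  have hlo : ∀ t, 1 ≤ t → encArea (ρ 1) - 6 * π ≤ encArea (ρ t) - 6 * π * t := by
    intro t ht
    have : MonotoneOn (fun s => encArea (ρ s) - 6 * π * s) (Ici 1) := by
      have hd : ∀ x ∈ Ici (1:ℝ), HasDerivAt (fun s => encArea (ρ s) - 6 * π * s) _ x :=
        fun x hx => (hasDerivAt_encArea' hρ (lt_of_lt_of_le one_pos hx)).sub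
          ((hasDerivAt_id x).const_mul (6 * π))
      refine monotoneOn_of_deriv_nonneg (convex_Ici 1)
        (fun x hx => (hd x hx).continuousAt.continuousWithinAt)
        (fun x hx => (hd x (interior_subset hx)).differentiableAt.differentiableWithinAt) ?_
      intro x hx
      rw [(hd x (interior_subset hx)).deriv]
      have hcl := flow_closed hρ (lt_of_lt_of_le one_pos (interior_subset hx : x ∈ Ici 1))
      have a1 := (stability hcl).1
      have a2 := encArea_pos hcl
      have a3 : 0 ≤ 2 * deficit (ρ x) / encArea (ρ x) := by positivity
      linarith
    simpa using this (mem_Ici.2 le_rfl) (mem_Ici.2 ht) ht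
  have hhi : ∀ t, 1 ≤ t → encArea (ρ t) - 6 * π * t ≤ encArea (ρ 1) - 6 * π + K * Real.log t := by
    intro t ht
    have : AntitoneOn (fun s => encArea (ρ s) - 6 * π * s - K * Real.log s) (Ici 1) := by
      have hd : ∀ x ∈ Ici (1:ℝ),
          HasDerivAt (fun s => encArea (ρ s) - 6 * π * s - K * Real.log s) _ x :=
        fun x hx => ((hasDerivAt_encArea' hρ (lt_of_lt_of_le one_pos hx)).sub
          ((hasDerivAt_id x).const_mul (6 * π))).sub
          ((Real.hasDerivAt_log (lt_of_lt_of_le one_pos hx).ne').const_mul K)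
      refine antitoneOn_of_deriv_nonpos (convex_Ici 1)
        (fun x hx => (hd x hx).continuousAt.continuousWithinAt)
        (fun x hx => (hd x (interior_subset hx)).differentiableAt.differentiableWithinAt) ?_
      intro x hx
      rw [(hd x (interior_subset hx)).deriv]
      have hx1 : 1 ≤ x := (interior_subset hx : x ∈ Ici 1)
      have hx0 : 0 < x := lt_of_lt_of_le one_pos hx1
      have hcl := flow_closed hρ hx0
      have a1 := (stability hcl).1
      have a2 := deficit_antitone hρ hx1
      have a3 : 2 * deficit (ρ x) / encArea (ρ x) ≤ 2 * deficit (ρ 1) / (μ * x) :=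
        div_le_div₀ (by linarith) (by linarith) (by positivity) (hlow x hx1)
      have a4 : 2 * deficit (ρ 1) / (μ * x) = K * x⁻¹ := by
        rw [hK]
        field_simp
      linarith
    have h2 := this (mem_Ici.2 le_rfl) (mem_Ici.2 ht) ht
    simp only [Real.log_one] at h2
    linarith
  have hinv : Tendsto (fun t : ℝ => (encArea (ρ 1) - 6 * π) / t) atTop (𝓝 0) :=
    tendsto_const_nhds.div_atTop tendsto_id
  have hlog : Tendsto (fun t : ℝ => Real.log t / t) atTop (𝓝 0) :=
    Real.isLittleO_log_id_atTop.tendsto_div_nhds_zero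
  have hup : Tendsto (fun t : ℝ => 6 * π + (encArea (ρ 1) - 6 * π) / t + K * (Real.log t / t))
      atTop (𝓝 (6 * π)) := by
    simpa using (tendsto_const_nhds.add hinv).add (hlog.const_mul K)
  have hdn : Tendsto (fun t : ℝ => 6 * π + (encArea (ρ 1) - 6 * π) / t) atTop (𝓝 (6 * π)) := by
    simpa using tendsto_const_nhds.add hinv
  refine tendsto_of_tendsto_of_tendsto_of_le_of_le' hdn hup ?_ ?_
  · filter_upwards [eventually_ge_atTop 1] with t ht
    have : 0 < t := by linarith
    rw [le_div_iff₀ this]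
    have := hlo t ht
    field_simp
    linarith
  · filter_upwards [eventually_ge_atTop 1] with t ht
    have : 0 < t := by linarith
    rw [div_le_iff₀ this]
    have := hhi t ht
    field_simp
    linarith

theorem tendsto_deficit_div (hρ : IsRCFSolutionInf ρ) :
    Tendsto (fun t => deficit (ρ t) / t) atTop (𝓝 0) := by
  refine tendsto_of_tendsto_of_tendsto_of_le_of_le' tendsto_const_nhds
    ((tendsto_const_nhds (x := deficit (ρ 1))).div_atTop tendsto_id) ?_ ?_
  · filter_upwards [eventually_ge_atTop 1] with t ht
    have : 0 < t := by linarith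
    exact div_nonneg (stability (flow_closed hρ this)).1 this.le
  · filter_upwards [eventually_ge_atTop 1] with t ht
    have : 0 < t := by linarith
    exact div_le_div_of_nonneg_right (deficit_antitone hρ ht) this.le

theorem tendsto_perim_sq_div (hρ : IsRCFSolutionInf ρ) :
    Tendsto (fun t => perim (ρ t) ^ 2 / t) atTop (𝓝 (24 * π ^ 2)) := by
  have := (tendsto_deficit_div hρ).add ((tendsto_encArea_div hρ).const_mul (4 * π))
  refine (this.congr fun t => ?_).trans (by ring_nf; rfl)
  rw [deficit]
  ring

theorem tendsto_ratio (hρ : IsRCFSolutionInf ρ) :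
    Tendsto (fun t => perim (ρ t) ^ 2 / encArea (ρ t)) atTop (𝓝 (4 * π)) := by
  have hpi := Real.pi_pos
  have := (tendsto_perim_sq_div hρ).div (tendsto_encArea_div hρ) (by positivity)
  have e : 24 * π ^ 2 / (6 * π) = 4 * π := by
    field_simp
    norm_num
  rw [e] at this
  refine this.congr' ?_
  filter_upwards [eventually_gt_atTop 0] with t ht
  simp only [Pi.div_apply]
  have := encArea_pos (flow_closed hρ ht)
  field_simp

/-- The mean value `σ / 2π` of the support function is asymptotic to `√(6t)`. -/
theorem tendsto_mean_radius (hρ : IsRCFSolutionInf ρ) :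
    Tendsto (fun t => perim (ρ t) / (2 * π) / Real.sqrt (6 * t)) atTop (𝓝 1) := by
  have hpi := Real.pi_pos
  have h1 := ((tendsto_perim_sq_div hρ).div_const (24 * π ^ 2)).sqrt
  rw [div_self (by positivity), Real.sqrt_one] at h1
  refine h1.congr' ?_
  filter_upwards [eventually_gt_atTop 0] with t ht
  have hp := perim_pos (flow_closed hρ ht)
  have : perim (ρ t) ^ 2 / t / (24 * π ^ 2) = (perim (ρ t) / (2 * π)) ^ 2 / (6 * t) := by
    field_simp
    norm_num
  rw [this, Real.sqrt_div (sq_nonneg _), Real.sqrt_sq (by positivity)]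

end flow

/-! ### Convergence of the rescaled sets -/

section limit
variable {ρ : ℝ → ℝ}

theorem bddAbove_inradius (h : IsClosedCurv ρ) {a : EuclideanSpace ℝ (Fin 2)} {R : ℝ}
    (hR : ∀ θ, inner ℝ (curveE ρ θ - a) (nu θ) ≤ R) :
    BddAbove {r : ℝ | ∃ c, Metric.closedBall c r ⊆ encSet ρ} := by
  refine ⟨max R 0, ?_⟩
  rintro r ⟨c, hc⟩
  rcases le_or_gt r 0 with hr | hr
  · exact hr.trans (le_max_right _ _)
  · have hl := le_inner_of_closedBall_subset h hr.le hc
    -- averaging the support function over two opposite normals removes the centre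
    have h1 := hl 0
    have h2 := hl π
    have h3 := hR 0
    have h4 := hR π
    have hn : nu π = -nu 0 := by
      ext i
      fin_cases i <;> simp [nu]
    rw [inner_sub_left] at h1 h2 h3 h4
    rw [hn] at h2 h4
    simp only [inner_neg_right] at h2 h4
    exact le_max_of_le_left (by linarith)

/-- The support function about any incentre `c` is close to its mean `σ / 2π`. The stability estimate
gives this about the Steiner point `a`; it also bounds the inradius below, so the inscribed disk
about `c` cannot be far off centre. -/
theorem pinching (h : IsClosedCurv ρ) {K : ℝ} (hK : π + deficit ρ / (3 * π) ≤ K)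
    (hm : K ≤ perim ρ / (2 * π)) {c : EuclideanSpace ℝ (Fin 2)}
    (hc : Metric.closedBall c (inradius ρ) ⊆ encSet ρ) (θ : ℝ) :
    perim ρ / (2 * π) - K ≤ inner ℝ (curveE ρ θ - c) (nu θ) ∧
      inner ℝ (curveE ρ θ - c) (nu θ) ≤ perim ρ / (2 * π) + 3 * K := by
  obtain ⟨-, a, ha⟩ := stability h
  set m := perim ρ / (2 * π) with hmdef
  have hlo : ∀ θ, m - K ≤ inner ℝ (curveE ρ θ - a) (nu θ) := fun θ => by
    have := (abs_le.1 (ha θ)).1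
    linarith
  have hhi : ∀ θ, inner ℝ (curveE ρ θ - a) (nu θ) ≤ m + K := fun θ => by
    have := (abs_le.1 (ha θ)).2
    linarith
  have hin : m - K ≤ inradius ρ :=
    le_csSup (bddAbove_inradius h hhi) ⟨a, closedBall_subset_encSet h hlo⟩
  have hlc : ∀ θ, m - K ≤ inner ℝ (curveE ρ θ - c) (nu θ) := fun θ =>
    hin.trans (le_inner_of_closedBall_subset h (by linarith) hc θ)
  refine ⟨hlc θ, ?_⟩
  -- the two centres are close: the support functions about them differ by `⟨c - a, ν⟩`
  have hca : ‖c - a‖ ≤ 2 * K := by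
    obtain ⟨φ, hφ⟩ := exists_nu (c - a)
    have h1 : inner ℝ (c - a) (nu φ) = ‖c - a‖ := by
      conv_lhs => rw [hφ]
      rw [real_inner_smul_left, real_inner_self_eq_norm_sq, norm_nu]
      ring
    have h2 := hlc φ
    have h3 := hhi φ
    rw [inner_sub_left] at h1 h2 h3
    linarith
  have h1 : inner ℝ (curveE ρ θ - c) (nu θ) =
      inner ℝ (curveE ρ θ - a) (nu θ) - inner ℝ (c - a) (nu θ) := by
    simp only [inner_sub_left]
    ring
  have h2 : -(‖c - a‖ * ‖nu θ‖) ≤ inner ℝ (c - a) (nu θ) :=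
    (abs_le.1 (abs_real_inner_le_norm _ _)).1
  rw [norm_nu, mul_one] at h2
  have := hhi θ
  linarith

/-- A set squeezed between two concentric disks is, after rescaling, close to the unit disk: points are
matched by radial scaling. -/
theorem hausdorffDist_disk_le {D : Set (EuclideanSpace ℝ (Fin 2))} {c : EuclideanSpace ℝ (Fin 2)}
    {r R s ε : ℝ} (hs : 0 < s) (hε0 : 0 ≤ ε) (hε1 : ε ≤ 1) (hr : 1 - ε ≤ r / s)
    (hR : R / s ≤ 1 + ε) (h1 : Metric.closedBall c r ⊆ D) (h2 : D ⊆ Metric.closedBall c R) :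
    Metric.hausdorffDist ((fun x => s⁻¹ • (x - c)) '' D) (Metric.closedBall 0 1) ≤ ε := by
  refine Metric.hausdorffDist_le_of_mem_dist hε0 ?_ ?_
  · rintro _ ⟨x, hx, rfl⟩
    have hx2 : ‖x - c‖ ≤ R := by simpa [dist_eq_norm] using h2 hx
    set y := s⁻¹ • (x - c) with hy
    have hyn : ‖y‖ ≤ 1 + ε := by
      rw [hy, norm_smul, norm_inv, Real.norm_of_nonneg hs.le]
      refine le_trans ?_ hR
      rw [div_eq_inv_mul]
      gcongr
    refine ⟨(1 + ε)⁻¹ • y, ?_, ?_⟩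
    · rw [mem_closedBall_zero_iff, norm_smul, norm_inv, Real.norm_of_nonneg (by linarith),
        inv_mul_le_iff₀ (by linarith)]
      linarith
    · have e : y - (1 + ε)⁻¹ • y = (ε / (1 + ε)) • y := by
        have : 1 - (1 + ε)⁻¹ = ε / (1 + ε) := by
          field_simp
          ring
        rw [← this, sub_smul, one_smul]
      rw [dist_eq_norm, e, norm_smul, Real.norm_of_nonneg (by positivity), div_mul_eq_mul_div,
        div_le_iff₀ (by linarith)]
      gcongr
  · intro x hx
    rw [mem_closedBall_zero_iff] at hx
    refine ⟨(1 - ε) • x, ⟨c + (s * (1 - ε)) • x, h1 ?_, ?_⟩, ?_⟩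
    · rw [mem_closedBall_iff_norm, add_sub_cancel_left, norm_smul,
        Real.norm_of_nonneg (mul_nonneg hs.le (by linarith))]
      rw [le_div_iff₀ hs] at hr
      nlinarith [mul_nonneg hs.le (sub_nonneg.2 hε1)]
    · simp only [add_sub_cancel_left, smul_smul]
      congr 1
      field_simp
    · have e : x - (1 - ε) • x = ε • x := by
        rw [sub_smul, one_smul]
        abel
      rw [dist_eq_norm, e, norm_smul, Real.norm_of_nonneg hε0]
      nlinarith

/-- The point `C(θ)`, recentred and rescaled, is matched with `ν(θ)`; the bound is the expansion of
`‖u - ν‖² = ‖u‖² - 2⟨u, ν⟩ + 1`. -/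
theorem hausdorffDist_circle_le {C : ℝ → EuclideanSpace ℝ (Fin 2)}
    {c : EuclideanSpace ℝ (Fin 2)} {r R s : ℝ} (hs : 0 < s)
    (hr : ∀ θ, r ≤ inner ℝ (C θ - c) (nu θ)) (hR : ∀ θ, ‖C θ - c‖ ≤ R) :
    Metric.hausdorffDist ((fun x => s⁻¹ • (x - c)) '' Set.range C) (Metric.sphere 0 1) ≤
      Real.sqrt ((R / s) ^ 2 - 2 * (r / s) + 1) := by
  have key : ∀ θ, dist (s⁻¹ • (C θ - c)) (nu θ) ≤ Real.sqrt ((R / s) ^ 2 - 2 * (r / s) + 1) := by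
    intro θ
    rw [dist_eq_norm]
    refine Real.le_sqrt_of_sq_le ?_
    rw [norm_sub_sq_real, norm_nu, norm_smul, real_inner_smul_left, norm_inv,
      Real.norm_of_nonneg hs.le]
    have a1 : (s⁻¹ * ‖C θ - c‖) ^ 2 ≤ (R / s) ^ 2 := by
      rw [div_eq_inv_mul]
      have := hR θ
      gcongr
    have a2 : r / s ≤ s⁻¹ * inner ℝ (C θ - c) (nu θ) := by
      rw [div_eq_inv_mul]
      have := hr θ
      gcongr
    linarith
  refine Metric.hausdorffDist_le_of_mem_dist (Real.sqrt_nonneg _) ?_ ?_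
  · rintro _ ⟨_, ⟨θ, rfl⟩, rfl⟩
    exact ⟨nu θ, by simp [norm_nu], key θ⟩
  · intro x hx
    obtain ⟨θ, hθ⟩ := exists_nu x
    rw [mem_sphere_zero_iff_norm.1 hx, one_smul] at hθ
    refine ⟨_, ⟨_, ⟨θ, rfl⟩, rfl⟩, ?_⟩
    rw [hθ, dist_comm]
    exact key θ

end limit

/-- If the renormalized curvature flow is defined for all times, then
`σ_t²/λ_t → 4π`, and the rescaled domains `(1/√(6t))(D_t − c_int(t))` converge in
Hausdorff distance to the closed unit disk, and the rescaled curves converge to the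
unit circle, where `c_int(t)` is a center of an inscribed circle of `C_t`. -/
theorem stmt6 (ρ : ℝ → ℝ → ℝ) (hρ : IsRCFSolutionInf ρ)
    (c : ℝ → EuclideanSpace ℝ (Fin 2))
    (hc : ∀ t ∈ Ici (0:ℝ), Metric.closedBall (c t) (inradius (ρ t)) ⊆ encSet (ρ t)) :
    Tendsto (fun t => (perim (ρ t)) ^ 2 / encArea (ρ t)) atTop (𝓝 (4 * π)) ∧
    Tendsto (fun t =>
        Metric.hausdorffDist
          ((fun x => (Real.sqrt (6 * t))⁻¹ • (x - c t)) '' encSet (ρ t))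
          (Metric.closedBall (0 : EuclideanSpace ℝ (Fin 2)) 1)) atTop (𝓝 0) ∧
    Tendsto (fun t =>
        Metric.hausdorffDist
          ((fun x => (Real.sqrt (6 * t))⁻¹ • (x - c t)) '' Set.range (curveE (ρ t)))
          (Metric.sphere (0 : EuclideanSpace ℝ (Fin 2)) 1)) atTop (𝓝 0) := by
  set K : ℝ := π + deficit (ρ 1) / (3 * π) with hKdef
  set m : ℝ → ℝ := fun t => perim (ρ t) / (2 * π) with hmdef
  have hpi := Real.pi_pos
  have hK0 : 0 ≤ K := by
    have := (stability (flow_closed hρ one_pos)).1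
    positivity
  have hsq : Tendsto (fun t : ℝ => Real.sqrt (6 * t)) atTop atTop :=
    Real.tendsto_sqrt_atTop.comp (tendsto_id.const_mul_atTop (by norm_num))
  have hKs : Tendsto (fun t : ℝ => K / Real.sqrt (6 * t)) atTop (𝓝 0) :=
    tendsto_const_nhds.div_atTop hsq
  have hms : Tendsto (fun t => m t / Real.sqrt (6 * t)) atTop (𝓝 1) := tendsto_mean_radius hρ
  have hKm : ∀ᶠ t in atTop, K ≤ m t := by
    have h1 := hsq.atTop_mul_pos one_pos hms
    filter_upwards [h1.eventually_ge_atTop K, eventually_gt_atTop 0] with t ht h0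
    have : Real.sqrt (6 * t) ≠ 0 := (Real.sqrt_pos.2 (by linarith)).ne'
    rwa [mul_div_cancel₀ _ this] at ht
  -- uniform pinching: the deficit at time `t ≥ 1` is at most the deficit at time `1`
  have hpinch : ∀ᶠ t in atTop, ∀ θ, m t - K ≤ inner ℝ (curveE (ρ t) θ - c t) (nu θ) ∧
      inner ℝ (curveE (ρ t) θ - c t) (nu θ) ≤ m t + 3 * K := by
    filter_upwards [eventually_ge_atTop 1, hKm] with t ht hk
    have h0 : 0 < t := by linarith
    refine pinching (flow_closed hρ h0) ?_ hk (hc t h0.le)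
    have := deficit_antitone hρ ht
    rw [hKdef]
    gcongr
  set ε : ℝ → ℝ := fun t => |m t / Real.sqrt (6 * t) - 1| + 3 * (K / Real.sqrt (6 * t)) with hε
  have hε0 : Tendsto ε atTop (𝓝 0) := by
    have := (hms.sub_const 1).abs.add (hKs.const_mul 3)
    rwa [sub_self, abs_zero, mul_zero, add_zero] at this
  refine ⟨tendsto_ratio hρ, ?_, ?_⟩
  · refine tendsto_of_tendsto_of_tendsto_of_le_of_le' tendsto_const_nhds hε0
      (Eventually.of_forall fun _ => Metric.hausdorffDist_nonneg) ?_
    filter_upwards [eventually_gt_atTop 0, hpinch, hε0.eventually_le_const one_pos] with t h0 hp h1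
    have hs : 0 < Real.sqrt (6 * t) := Real.sqrt_pos.2 (by linarith)
    have hcl := flow_closed hρ h0
    have hk : 0 ≤ K / Real.sqrt (6 * t) := by positivity
    refine hausdorffDist_disk_le hs (by positivity) h1 ?_ ?_
      (closedBall_subset_encSet hcl fun θ => (hp θ).1)
      (encSet_subset_closedBall hcl fun θ => (hp θ).2)
    · rw [_root_.sub_div]
      have := neg_abs_le (m t / Real.sqrt (6 * t) - 1)
      simp only [hε]
      linarith
    · rw [_root_.add_div, mul_div_assoc]
      have := le_abs_self (m t / Real.sqrt (6 * t) - 1)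
      simp only [hε]
      linarith
  · have hlim : Tendsto (fun t => Real.sqrt (((m t + 3 * K) / Real.sqrt (6 * t)) ^ 2 -
        2 * ((m t - K) / Real.sqrt (6 * t)) + 1)) atTop (𝓝 0) := by
      have h1 := ((((hms.add (hKs.const_mul 3)).pow 2).sub
        ((hms.sub hKs).const_mul 2)).add_const 1).sqrt
      have e : Real.sqrt ((1 + 3 * 0) ^ 2 - 2 * (1 - 0) + 1) = 0 := by norm_num
      rw [e] at h1
      refine h1.congr fun t => ?_
      congr 1
      ring
    refine tendsto_of_tendsto_of_tendsto_of_le_of_le' tendsto_const_nhds hlim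
      (Eventually.of_forall fun _ => Metric.hausdorffDist_nonneg) ?_
    filter_upwards [eventually_gt_atTop 0, hpinch] with t h0 hp
    refine hausdorffDist_circle_le (Real.sqrt_pos.2 (by linarith)) (fun θ => (hp θ).1) fun θ => ?_
    have := encSet_subset_closedBall (flow_closed hρ h0) (fun θ => (hp θ).2)
      (subset_convexHull ℝ _ (mem_range_self θ))
    rwa [mem_closedBall_iff_norm] at this
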